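/- There exists a holomorphic function g_+ on D = ℂ ∖ 𝒞(a,b) such that (g_+(z))² = f_{a,b}(z) for all z ∈ D, g_+(z) → 1 as |z| → ∞, and the square-root branches g^N_+ of the partial products converge to g_+ uniformly on every compact subset of D as N → ∞. -/

import Mathlib

open Filter Topology

/-- The Cantor-type set 𝒞(a,b) = [a₀,b₀] ∖ ⋃_{i≥1} (aᵢ,bᵢ), viewed as a subset of ℂ. -/
noncomputable def cantorAB (a b : ℕ → ℝ) : Set ℂ :=
  (fun x : ℝ => (x : ℂ)) '' (Set.Icc (a 0) (b 0) \ ⋃ i : ℕ, Set.Ioo (a (i + 1)) (b (i + 1)))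

/-- The partial product f^N(z) = ((z−b₀)/(z−a₀)) ∏_{i=1}^N (z−aᵢ)/(z−bᵢ). -/
noncomputable def partialProd (a b : ℕ → ℝ) (N : ℕ) (z : ℂ) : ℂ :=
  ((z - (b 0 : ℂ)) / (z - (a 0 : ℂ))) *
    ∏ i ∈ Finset.Icc 1 N, ((z - (a i : ℂ)) / (z - (b i : ℂ)))

/-- D_N = ℂ ∖ ([a₀,b₀] ∖ ⋃_{j=1}^N (a_j,b_j)). -/
noncomputable def domDN (a b : ℕ → ℝ) (N : ℕ) : Set ℂ :=
  ((fun x : ℝ => (x : ℂ)) ''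
    (Set.Icc (a 0) (b 0) \ ⋃ j ∈ Set.Icc 1 N, Set.Ioo (a j) (b j)))ᶜ

/-- The lengths of pairwise disjoint intervals contained in a bounded interval are summable. -/
theorem summable_length_of_pairwise_disjoint_Icc {c d : ℝ} {a b : ℕ → ℝ}
    (hab : ∀ i, a i ≤ b i) (hsub : ∀ i, Set.Icc (a i) (b i) ⊆ Set.Icc c d)
    (hdisj : Pairwise (Function.onFun Disjoint fun i => Set.Icc (a i) (b i))) :
    Summable fun i => b i - a i := by
  have hfin : ∑' i, MeasureTheory.volume (Set.Icc (a i) (b i)) ≠ ⊤ := by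
    refine ne_top_of_le_ne_top ?_ (MeasureTheory.tsum_meas_le_meas_iUnion_of_disjoint
      MeasureTheory.volume (fun i => measurableSet_Icc) hdisj)
    exact ne_top_of_le_ne_top measure_Icc_lt_top.ne
      (MeasureTheory.measure_mono (Set.iUnion_subset hsub))
  refine (ENNReal.summable_toReal hfin).congr fun i => ?_
  rw [Real.volume_Icc, ENNReal.toReal_ofReal (sub_nonneg.2 (hab i))]

theorem Complex.sqrt_sq_self (w : ℂ) : w.sqrt ^ 2 = w := by
  simp [Complex.sqrt]

theorem Complex.sqrt_re_nonneg (w : ℂ) : 0 ≤ w.sqrt.re := by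
  rw [Complex.sqrt, Complex.cpow_inv_two_re]
  exact Real.sqrt_nonneg _

/-- The principal square root is closer to `1` than its argument. -/
theorem Complex.norm_sqrt_sub_one_le (w : ℂ) : ‖w.sqrt - 1‖ ≤ ‖w - 1‖ := by
  have hone : 1 ≤ ‖w.sqrt + 1‖ := by
    refine le_trans ?_ (Complex.re_le_norm _)
    simpa using Complex.sqrt_re_nonneg w
  have hfac : w - 1 = (w.sqrt - 1) * (w.sqrt + 1) := by
    linear_combination -(Complex.sqrt_sq_self w)
  rw [hfac, norm_mul]
  exact le_mul_of_one_le_right (norm_nonneg _) hone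

/-- The quotient `(z - c) / (z - d)` avoids the nonpositive reals off the segment `[c, d]`. -/
theorem div_sub_ofReal_mem_slitPlane {c d : ℝ} {z : ℂ}
    (hz : z ∉ (fun x : ℝ => (x : ℂ)) '' Set.uIcc c d) :
    (z - c) / (z - d) ∈ Complex.slitPlane := by
  rw [Complex.mem_slitPlane_iff_not_le_zero]
  intro hle
  apply hz
  have hd : z - d ≠ 0 := by
    intro h
    exact hz ⟨d, Set.right_mem_uIcc, (sub_eq_zero.1 h).symm⟩
  obtain ⟨hre, him⟩ := Complex.le_def.1 hle
  set t : ℝ := -((z - c) / (z - d)).re with ht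
  have ht0 : 0 ≤ t := by simpa [ht] using hre
  have hq : (z - c) / (z - d) = ((-t : ℝ) : ℂ) := by
    apply Complex.ext
    · simp [ht]
    · simpa using him
  rw [div_eq_iff hd] at hq
  have hpos : 0 < 1 + t := by linarith
  have hne : (1 + t : ℂ) ≠ 0 := by exact_mod_cast hpos.ne'
  refine ⟨(c + t * d) / (1 + t), ?_, ?_⟩
  · rcases le_total c d with h | h
    · rw [Set.uIcc_of_le h]
      constructor
      · rw [le_div_iff₀ hpos]; nlinarith
      · rw [div_le_iff₀ hpos]; nlinarith
    · rw [Set.uIcc_of_ge h]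
      constructor
      · rw [le_div_iff₀ hpos]; nlinarith
      · rw [div_le_iff₀ hpos]; nlinarith
  · push_cast
    rw [div_eq_iff hne]
    push_cast at hq
    linear_combination -hq

/-- The principal branch of `√((z - c) / (z - d))`. -/
noncomputable def sqrtRatio (c d : ℝ) (z : ℂ) : ℂ := Complex.sqrt ((z - c) / (z - d))

theorem sqrtRatio_sq (c d : ℝ) (z : ℂ) : sqrtRatio c d z ^ 2 = (z - c) / (z - d) :=
  Complex.sqrt_sq_self _

theorem sqrtRatio_ne_zero {c d : ℝ} {z : ℂ}
    (hz : z ∉ (fun x : ℝ => (x : ℂ)) '' Set.uIcc c d) : sqrtRatio c d z ≠ 0 := by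
  intro h
  have hsq := sqrtRatio_sq c d z
  rw [h] at hsq
  exact Complex.slitPlane_ne_zero (div_sub_ofReal_mem_slitPlane hz) (by simpa using hsq.symm)

theorem differentiableAt_sqrtRatio {c d : ℝ} {z : ℂ}
    (hz : z ∉ (fun x : ℝ => (x : ℂ)) '' Set.uIcc c d) :
    DifferentiableAt ℂ (sqrtRatio c d) z := by
  have hd : z - d ≠ 0 := by
    intro h
    exact hz ⟨d, Set.right_mem_uIcc, (sub_eq_zero.1 h).symm⟩
  have hq : DifferentiableAt ℂ (fun z : ℂ => (z - c) / (z - d)) z :=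
    (differentiableAt_id.sub_const _).div (differentiableAt_id.sub_const _) hd
  exact hq.cpow_const (div_sub_ofReal_mem_slitPlane hz)

theorem norm_sqrtRatio_sub_one_le (c d : ℝ) {z : ℂ} (hz : z ≠ d) :
    ‖sqrtRatio c d z - 1‖ ≤ |d - c| / ‖z - d‖ := by
  have hd : z - d ≠ 0 := sub_ne_zero.2 hz
  refine (Complex.norm_sqrt_sub_one_le _).trans_eq ?_
  rw [div_sub_one hd, norm_div, sub_sub_sub_cancel_left, ← Complex.ofReal_sub,
    Complex.norm_real, Real.norm_eq_abs]

theorem tendsto_sqrtRatio_cobounded (c d : ℝ) :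
    Tendsto (sqrtRatio c d) (Bornology.cobounded ℂ) (𝓝 1) := by
  rw [tendsto_iff_norm_sub_tendsto_zero]
  have hnorm : Tendsto (fun z : ℂ => ‖z - d‖) (Bornology.cobounded ℂ) atTop := by
    refine tendsto_atTop_mono (fun z => norm_sub_norm_le z d) ?_
    simpa [sub_eq_add_neg] using
      tendsto_atTop_add_const_right _ (-‖(d : ℂ)‖) tendsto_norm_cobounded_atTop
  refine squeeze_zero' (Eventually.of_forall fun z => norm_nonneg _) ?_
    (hnorm.const_div_atTop |d - c|)
  filter_upwards [Bornology.eventually_ne_cobounded (d : ℂ)] with z hz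
  exact norm_sqrtRatio_sub_one_le c d hz

/-- An infinite product whose factors satisfy `‖F i z - 1‖ ≤ l i / ‖z - p i‖`, with `l` summable
and bounded poles `p i` outside the open set `U`, converges locally uniformly on `U`, to a
function that tends to `1` at infinity. -/
theorem exists_tendstoLocallyUniformlyOn_prod {U : Set ℂ} (hU : IsOpen U)
    (hUinf : U ∈ Bornology.cobounded ℂ) {l : ℕ → ℝ} (hl : Summable l) (hl0 : ∀ i, 0 ≤ l i)
    {p : ℕ → ℂ} (hp : ∀ i, p i ∉ U) {R : ℝ} (hR : ∀ i, ‖p i‖ ≤ R) {F : ℕ → ℂ → ℂ}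
    (hF : ∀ i, ContinuousOn (F i) U) (hbound : ∀ i, ∀ z ∈ U, ‖F i z - 1‖ ≤ l i / ‖z - p i‖) :
    ∃ h : ℂ → ℂ,
      TendstoLocallyUniformlyOn (fun N z => ∏ i ∈ Finset.range N, F i z) h atTop U ∧
      Tendsto h (Bornology.cobounded ℂ) (𝓝 1) := by
  have hloc : TendstoLocallyUniformlyOn (fun N z => ∏ i ∈ Finset.range N, F i z)
      (fun z => ∏' i, (1 + (F i z - 1))) atTop U := by
    rw [tendstoLocallyUniformlyOn_iff_forall_isCompact hU]
    intro K hKU hK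
    obtain ⟨δ, hδ, hdist⟩ : ∃ δ > 0, ∀ i, ∀ z ∈ K, δ ≤ ‖z - p i‖ := by
      obtain ⟨δ, hδ, hthick⟩ := hK.exists_thickening_subset_open hU hKU
      refine ⟨δ, hδ, fun i z hz => not_lt.1 fun hlt => hp i (hthick ?_)⟩
      rw [Metric.mem_thickening_iff]
      exact ⟨z, hz, by rwa [dist_comm, dist_eq_norm]⟩
    have hprod := Summable.hasProdUniformlyOn_nat_one_add (f := fun i z => F i z - 1) hK
      (hl.div_const δ)
      (Eventually.of_forall fun i z hz => (hbound i z (hKU hz)).trans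
        (div_le_div_of_nonneg_left (hl0 i) hδ (hdist i z hz)))
      (fun i => ((hF i).mono hKU).sub continuousOn_const)
    simpa using hprod.tendstoUniformlyOn_finsetRange
  refine ⟨_, hloc, ?_⟩
  rw [tendsto_iff_norm_sub_tendsto_zero]
  have hnorm : Tendsto (fun z : ℂ => ‖z‖ - R) (Bornology.cobounded ℂ) atTop := by
    simpa [sub_eq_add_neg] using
      tendsto_atTop_add_const_right _ (-R) tendsto_norm_cobounded_atTop
  have hexp : Tendsto (fun z : ℂ => Real.exp ((∑' i, l i) / (‖z‖ - R)) - 1)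
      (Bornology.cobounded ℂ) (𝓝 0) := by
    have := ((Real.continuous_exp.tendsto 0).comp
      (hnorm.const_div_atTop (∑' i, l i))).sub_const 1
    simpa using this
  refine squeeze_zero' (Eventually.of_forall fun z => norm_nonneg _) ?_ hexp
  filter_upwards [hUinf, hnorm.eventually_gt_atTop 0] with z hz hpos
  refine le_of_tendsto ((hloc.tendsto_at hz).sub_const 1).norm (Eventually.of_forall fun N => ?_)
  have hprod := Finset.norm_prod_one_add_sub_one_le (Finset.range N) (fun i => F i z - 1)
  simp only [add_sub_cancel] at hprod
  refine hprod.trans (sub_le_sub_right (Real.exp_le_exp.2 ?_) 1)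
  calc ∑ i ∈ Finset.range N, ‖F i z - 1‖
      ≤ ∑ i ∈ Finset.range N, l i / (‖z‖ - R) := by
        refine Finset.sum_le_sum fun i _ => (hbound i z hz).trans
          (div_le_div_of_nonneg_left (hl0 i) hpos ?_)
        linarith [norm_sub_norm_le z (p i), hR i]
    _ = (∑ i ∈ Finset.range N, l i) / (‖z‖ - R) := (Finset.sum_div _ _ _).symm
    _ ≤ (∑' i, l i) / (‖z‖ - R) := by
        gcongr
        exact hl.sum_le_tsum _ fun i _ => hl0 i

/-- The plane slit along the two real segments `[c, α]` and `[β, d]`. -/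
def gapDomain (c d α β : ℝ) : Set ℂ :=
  ((fun x : ℝ => (x : ℂ)) '' (Set.Icc c d \ Set.Ioo α β))ᶜ

theorem isOpen_gapDomain (c d α β : ℝ) : IsOpen (gapDomain c d α β) :=
  ((isCompact_Icc.diff isOpen_Ioo).image Complex.continuous_ofReal).isClosed.isOpen_compl

theorem gapDomain_mem_cobounded (c d α β : ℝ) :
    gapDomain c d α β ∈ Bornology.cobounded ℂ :=
  Bornology.isBounded_def.1
    ((isCompact_Icc.diff isOpen_Ioo).image Complex.continuous_ofReal).isBounded

theorem mem_gapDomain_iff {c d α β : ℝ} {z : ℂ} :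
    z ∈ gapDomain c d α β ↔ z.im ≠ 0 ∨ z.re < c ∨ d < z.re ∨ (α < z.re ∧ z.re < β) := by
  have hmem : z ∈ (fun x : ℝ => (x : ℂ)) '' (Set.Icc c d \ Set.Ioo α β) ↔
      z.im = 0 ∧ z.re ∈ Set.Icc c d \ Set.Ioo α β := by
    constructor
    · rintro ⟨x, hx, rfl⟩
      exact ⟨by simp, by simpa using hx⟩
    · rintro ⟨him, hre⟩
      exact ⟨z.re, hre, Complex.ext (by simp) (by simp [him])⟩
  rw [gapDomain, Set.mem_compl_iff, hmem]
  simp only [Set.mem_sdiff, Set.mem_Icc, Set.mem_Ioo]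
  grind

theorem isPreconnected_gapDomain {c d α β : ℝ} (hαβ : α < β) :
    IsPreconnected (gapDomain c d α β) := by
  have hup : IsPreconnected {z : ℂ | 0 < z.im} := (convex_halfSpace_im_gt 0).isPreconnected
  have hlow : IsPreconnected {z : ℂ | z.im < 0} := (convex_halfSpace_im_lt 0).isPreconnected
  have hleft : IsPreconnected {z : ℂ | z.re < c} := (convex_halfSpace_re_lt c).isPreconnected
  have hright : IsPreconnected {z : ℂ | d < z.re} := (convex_halfSpace_re_gt d).isPreconnected
  have hgap : IsPreconnected ({z : ℂ | α < z.re} ∩ {z : ℂ | z.re < β}) :=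
    ((convex_halfSpace_re_gt α).inter (convex_halfSpace_re_lt β)).isPreconnected
  have hm₁ : α < (α + β) / 2 := by linarith
  have hm₂ : (α + β) / 2 < β := by linarith
  have hunion := (((hgap.union (⟨(α + β) / 2, 1⟩ : ℂ) (And.intro hm₁ hm₂) (by simp) hup).union
    (⟨(α + β) / 2, -1⟩ : ℂ) (Or.inl (And.intro hm₁ hm₂)) (by simp) hlow).union
    (⟨c - 1, 1⟩ : ℂ) (Or.inl (Or.inr (by simp))) (by simp) hleft).union
    (⟨d + 1, 1⟩ : ℂ) (Or.inl (Or.inl (Or.inr (by simp)))) (by simp) hright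
  convert hunion using 1
  ext z
  rw [mem_gapDomain_iff]
  simp only [Set.mem_union, Set.mem_inter_iff, Set.mem_ofPred_eq]
  grind

/-- Two square roots of the same nowhere vanishing function on a connected neighbourhood of
infinity agree if they have the same nonzero limit at infinity. -/
theorem eqOn_of_sq_eqOn_of_tendsto_cobounded {U : Set ℂ} (hU : IsPreconnected U)
    (hUinf : U ∈ Bornology.cobounded ℂ) {g h : ℂ → ℂ} (hg : ContinuousOn g U)
    (hh : ContinuousOn h U) (hsq : ∀ z ∈ U, g z ^ 2 = h z ^ 2) (hne : ∀ z ∈ U, h z ≠ 0)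
    (hg1 : Tendsto g (Bornology.cobounded ℂ) (𝓝 1))
    (hh1 : Tendsto h (Bornology.cobounded ℂ) (𝓝 1)) : Set.EqOn g h U := by
  rcases hU.eq_or_eq_neg_of_sq_eq hg hh hsq (fun {z} hz => hne z hz) with heq | hneg
  · exact heq
  · have hlim : Tendsto g (Bornology.cobounded ℂ) (𝓝 (-1)) :=
      hh1.neg.congr' (by filter_upwards [hUinf] with z hz using (hneg hz).symm)
    have := tendsto_nhds_unique hg1 hlim
    norm_num at this

theorem prod_Icc_one_eq_prod_range {M : Type*} [CommMonoid M] (u : ℕ → M) (N : ℕ) :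
    ∏ i ∈ Finset.Icc 1 N, u i = ∏ i ∈ Finset.range N, u (i + 1) := by
  induction N with
  | zero => simp
  | succ n ih => rw [Finset.prod_Icc_succ_top (by omega), Finset.prod_range_succ, ih]

/-- On the plane slit along `[a₀, b₀] ∖ (a_j, b_j)`, the branch of `√f^N` as a product of
principal branches. -/
noncomputable def gapBranch (a b : ℕ → ℝ) (j N : ℕ) (z : ℂ) : ℂ :=
  sqrtRatio (a j) (a 0) z * sqrtRatio (b 0) (b j) z *
    ∏ i ∈ Finset.Icc 1 N, if i = j then 1 else sqrtRatio (a i) (b i) z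

section Gaps

variable {a b : ℕ → ℝ} {j : ℕ}

theorem gapBranch_sq (hj : 1 ≤ j) {N : ℕ} (hN : j ≤ N) (z : ℂ) :
    gapBranch a b j N z ^ 2 = partialProd a b N z := by
  have hmem : j ∈ Finset.Icc 1 N := Finset.mem_Icc.2 ⟨hj, hN⟩
  rw [gapBranch, partialProd, mul_pow, mul_pow, sqrtRatio_sq, sqrtRatio_sq, ← Finset.prod_pow,
    ← Finset.mul_prod_erase _ _ hmem, ← Finset.mul_prod_erase (Finset.Icc 1 N)
      (fun i => (z - (a i : ℂ)) / (z - (b i : ℂ))) hmem]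
  have herase : ∏ i ∈ (Finset.Icc 1 N).erase j,
      (if i = j then 1 else sqrtRatio (a i) (b i) z) ^ 2 =
      ∏ i ∈ (Finset.Icc 1 N).erase j, (z - (a i : ℂ)) / (z - (b i : ℂ)) := by
    refine Finset.prod_congr rfl fun i hi => ?_
    rw [if_neg (Finset.ne_of_mem_erase hi), sqrtRatio_sq]
  rw [herase]
  simp only [if_true, one_pow, one_mul]
  ring

theorem tendsto_gapBranch_cobounded (a b : ℕ → ℝ) (j N : ℕ) :
    Tendsto (gapBranch a b j N) (Bornology.cobounded ℂ) (𝓝 1) := by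
  have hprod : Tendsto (fun z => ∏ i ∈ Finset.Icc 1 N,
      if i = j then 1 else sqrtRatio (a i) (b i) z) (Bornology.cobounded ℂ)
      (𝓝 (∏ i ∈ Finset.Icc 1 N, 1)) := by
    refine tendsto_finsetProd _ fun i _ => ?_
    split_ifs
    · exact tendsto_const_nhds
    · exact tendsto_sqrtRatio_cobounded _ _
  have hlim := ((tendsto_sqrtRatio_cobounded (a j) (a 0)).mul
    (tendsto_sqrtRatio_cobounded (b 0) (b j))).mul hprod
  simp only [Finset.prod_const_one, mul_one] at hlim
  exact hlim

theorem notMem_image_of_mem_gapDomain {c d α β : ℝ} {s : Set ℝ}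
    (hs : s ⊆ Set.Icc c d \ Set.Ioo α β) {z : ℂ} (hz : z ∈ gapDomain c d α β) :
    z ∉ (fun x : ℝ => (x : ℂ)) '' s :=
  fun h => hz (Set.image_mono hs h)

theorem gap_edge_subset (hab : ∀ j, a j < b j)
    (hsub : ∀ i, 1 ≤ i → Set.Icc (a i) (b i) ⊆ Set.Ioo (a 0) (b 0)) (hj : 1 ≤ j) :
    Set.uIcc (a j) (a 0) ⊆ Set.Icc (a 0) (b 0) \ Set.Ioo (a j) (b j) ∧
    Set.uIcc (b 0) (b j) ⊆ Set.Icc (a 0) (b 0) \ Set.Ioo (a j) (b j) := by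
  have ha := hsub j hj (Set.left_mem_Icc.2 (hab j).le)
  have hb := hsub j hj (Set.right_mem_Icc.2 (hab j).le)
  rw [Set.uIcc_of_ge ha.1.le, Set.uIcc_of_ge hb.2.le]
  constructor
  · intro x hx
    exact ⟨⟨hx.1, hx.2.trans ha.2.le⟩, fun h => absurd hx.2 (not_le.2 h.1)⟩
  · intro x hx
    exact ⟨⟨hb.1.le.trans hx.1, hx.2⟩, fun h => absurd hx.1 (not_le.2 h.2)⟩

theorem other_gap_subset (hab : ∀ j, a j < b j)
    (hsub : ∀ i, 1 ≤ i → Set.Icc (a i) (b i) ⊆ Set.Ioo (a 0) (b 0))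
    (hdisj : ∀ i k, 1 ≤ i → 1 ≤ k → i ≠ k →
      Disjoint (Set.Icc (a i) (b i)) (Set.Icc (a k) (b k)))
    (hj : 1 ≤ j) {i : ℕ} (hi : 1 ≤ i) (hij : i ≠ j) :
    Set.uIcc (a i) (b i) ⊆ Set.Icc (a 0) (b 0) \ Set.Ioo (a j) (b j) := by
  rw [Set.uIcc_of_le (hab i).le]
  exact fun x hx => ⟨Set.Ioo_subset_Icc_self (hsub i hi hx), fun h =>
    Set.disjoint_left.1 (hdisj i j hi hj hij) hx (Set.Ioo_subset_Icc_self h)⟩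

theorem differentiableOn_gapBranch (hab : ∀ j, a j < b j)
    (hsub : ∀ i, 1 ≤ i → Set.Icc (a i) (b i) ⊆ Set.Ioo (a 0) (b 0))
    (hdisj : ∀ i k, 1 ≤ i → 1 ≤ k → i ≠ k →
      Disjoint (Set.Icc (a i) (b i)) (Set.Icc (a k) (b k))) (hj : 1 ≤ j) (N : ℕ) :
    DifferentiableOn ℂ (gapBranch a b j N) (gapDomain (a 0) (b 0) (a j) (b j)) := by
  intro z hz
  obtain ⟨hleft, hright⟩ := gap_edge_subset hab hsub hj
  refine DifferentiableAt.differentiableWithinAt ?_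
  refine ((differentiableAt_sqrtRatio (notMem_image_of_mem_gapDomain hleft hz)).mul
    (differentiableAt_sqrtRatio (notMem_image_of_mem_gapDomain hright hz))).mul ?_
  refine DifferentiableAt.fun_finsetProd fun i hi => ?_
  split_ifs with hij
  · exact differentiableAt_const _
  · exact differentiableAt_sqrtRatio (notMem_image_of_mem_gapDomain
      (other_gap_subset hab hsub hdisj hj (Finset.mem_Icc.1 hi).1 hij) hz)

theorem gapBranch_ne_zero (hab : ∀ j, a j < b j)
    (hsub : ∀ i, 1 ≤ i → Set.Icc (a i) (b i) ⊆ Set.Ioo (a 0) (b 0))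
    (hdisj : ∀ i k, 1 ≤ i → 1 ≤ k → i ≠ k →
      Disjoint (Set.Icc (a i) (b i)) (Set.Icc (a k) (b k))) (hj : 1 ≤ j) (N : ℕ) {z : ℂ}
    (hz : z ∈ gapDomain (a 0) (b 0) (a j) (b j)) : gapBranch a b j N z ≠ 0 := by
  obtain ⟨hleft, hright⟩ := gap_edge_subset hab hsub hj
  refine mul_ne_zero (mul_ne_zero (sqrtRatio_ne_zero (notMem_image_of_mem_gapDomain hleft hz))
    (sqrtRatio_ne_zero (notMem_image_of_mem_gapDomain hright hz)))
    (Finset.prod_ne_zero_iff.2 fun i hi => ?_)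
  split_ifs with hij
  · exact one_ne_zero
  · exact sqrtRatio_ne_zero (notMem_image_of_mem_gapDomain
      (other_gap_subset hab hsub hdisj hj (Finset.mem_Icc.1 hi).1 hij) hz)

/-- The branches `gapBranch a b j N` converge locally uniformly as `N → ∞`, to a function that
tends to `1` at infinity. -/
theorem exists_tendstoLocallyUniformlyOn_gapBranch (hab : ∀ j, a j < b j)
    (hsub : ∀ i, 1 ≤ i → Set.Icc (a i) (b i) ⊆ Set.Ioo (a 0) (b 0))
    (hdisj : ∀ i k, 1 ≤ i → 1 ≤ k → i ≠ k →
      Disjoint (Set.Icc (a i) (b i)) (Set.Icc (a k) (b k))) (hj : 1 ≤ j) :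
    ∃ h : ℂ → ℂ,
      TendstoLocallyUniformlyOn (gapBranch a b j) h atTop
        (gapDomain (a 0) (b 0) (a j) (b j)) ∧
      Tendsto h (Bornology.cobounded ℂ) (𝓝 1) := by
  set U := gapDomain (a 0) (b 0) (a j) (b j)
  obtain ⟨hleft, hright⟩ := gap_edge_subset hab hsub hj
  have hl : Summable fun i => b (i + 1) - a (i + 1) :=
    summable_length_of_pairwise_disjoint_Icc (fun i => (hab (i + 1)).le)
      (fun i => (hsub (i + 1) (by omega)).trans Set.Ioo_subset_Icc_self)
      (fun i k hik => hdisj (i + 1) (k + 1) (by omega) (by omega) (by omega))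
  have hp : ∀ i, ((b (i + 1) : ℝ) : ℂ) ∉ U := by
    intro i hmem
    by_cases hij : i + 1 = j
    · exact notMem_image_of_mem_gapDomain hright hmem
        ⟨b (i + 1), by rw [hij]; exact Set.right_mem_uIcc, rfl⟩
    · exact notMem_image_of_mem_gapDomain
        (other_gap_subset hab hsub hdisj hj (by omega) hij) hmem
        ⟨b (i + 1), Set.right_mem_uIcc, rfl⟩
  have hR : ∀ i, ‖((b (i + 1) : ℝ) : ℂ)‖ ≤ max |a 0| |b 0| := by
    intro i
    have hb := hsub (i + 1) (by omega) (Set.right_mem_Icc.2 (hab (i + 1)).le)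
    rw [Complex.norm_real]
    exact abs_le_max_abs_abs hb.1.le hb.2.le
  have hcont : ∀ i, ContinuousOn
      (fun z => if i + 1 = j then 1 else sqrtRatio (a (i + 1)) (b (i + 1)) z) U := by
    intro i z hz
    split_ifs with hij
    · exact continuousWithinAt_const
    · exact (differentiableAt_sqrtRatio (notMem_image_of_mem_gapDomain
        (other_gap_subset hab hsub hdisj hj (by omega) hij)
        hz)).continuousAt.continuousWithinAt
  have hbound : ∀ i, ∀ z ∈ U,
      ‖(if i + 1 = j then 1 else sqrtRatio (a (i + 1)) (b (i + 1)) z) - 1‖ ≤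
        (b (i + 1) - a (i + 1)) / ‖z - b (i + 1)‖ := by
    intro i z hz
    have hlen : 0 < b (i + 1) - a (i + 1) := sub_pos.2 (hab (i + 1))
    split_ifs
    · rw [sub_self, norm_zero]
      positivity
    · have hzb : z ≠ b (i + 1) := fun h => hp i (h ▸ hz)
      simpa only [abs_of_pos hlen] using norm_sqrtRatio_sub_one_le (a (i + 1)) (b (i + 1)) hzb
  obtain ⟨h, hlim, hinf⟩ := exists_tendstoLocallyUniformlyOn_prod
    (isOpen_gapDomain _ _ _ _) (gapDomain_mem_cobounded _ _ _ _) hl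
    (fun i => (sub_pos.2 (hab (i + 1))).le) hp hR hcont hbound
  refine ⟨fun z => sqrtRatio (a j) (a 0) z * sqrtRatio (b 0) (b j) z * h z, ?_, ?_⟩
  · have hedge : ContinuousOn
        (fun z => sqrtRatio (a j) (a 0) z * sqrtRatio (b 0) (b j) z) U := fun z hz =>
      ((differentiableAt_sqrtRatio (notMem_image_of_mem_gapDomain hleft hz)).continuousAt.mul
        (differentiableAt_sqrtRatio
          (notMem_image_of_mem_gapDomain hright hz)).continuousAt).continuousWithinAt
    have hconst : TendstoLocallyUniformlyOn
        (fun (_ : ℕ) z => sqrtRatio (a j) (a 0) z * sqrtRatio (b 0) (b j) z)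
        (fun z => sqrtRatio (a j) (a 0) z * sqrtRatio (b 0) (b j) z) atTop U :=
      fun u hu z _ => ⟨U, self_mem_nhdsWithin,
        Eventually.of_forall fun _ _ _ => refl_mem_uniformity hu⟩
    have hhcont : ContinuousOn h U := hlim.continuousOn
      (Frequently.of_forall fun N => continuousOn_finsetProd _ fun i _ => hcont i)
    refine (hconst.mul₀ hlim hedge hhcont).congr fun N z _ => ?_
    simp only [gapBranch, prod_Icc_one_eq_prod_range, Pi.mul_apply]
  · simpa using ((tendsto_sqrtRatio_cobounded (a j) (a 0)).mul
      (tendsto_sqrtRatio_cobounded (b 0) (b j))).mul hinf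

theorem gapDomain_subset_domDN (hj : 1 ≤ j) {N : ℕ} (hN : j ≤ N) :
    gapDomain (a 0) (b 0) (a j) (b j) ⊆ domDN a b N := by
  refine Set.compl_subset_compl.2 (Set.image_mono (Set.sdiff_subset_sdiff_right ?_))
  exact Set.subset_biUnion_of_mem (u := fun j => Set.Ioo (a j) (b j))
    (Set.mem_Icc.2 ⟨hj, hN⟩)

theorem gapDomain_subset_compl_cantorAB (hj : 1 ≤ j) :
    gapDomain (a 0) (b 0) (a j) (b j) ⊆ (cantorAB a b)ᶜ := by
  obtain ⟨i, rfl⟩ := Nat.exists_eq_add_of_le' hj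
  refine Set.compl_subset_compl.2 (Set.image_mono (Set.sdiff_subset_sdiff_right ?_))
  exact Set.subset_iUnion (fun i => Set.Ioo (a (i + 1)) (b (i + 1))) i

theorem exists_mem_gapDomain {z : ℂ} (hz : z ∉ cantorAB a b) :
    ∃ j, 1 ≤ j ∧ z ∈ gapDomain (a 0) (b 0) (a j) (b j) := by
  by_contra! hcon
  simp only [mem_gapDomain_iff, not_or, not_not, not_lt] at hcon
  obtain ⟨him, hc, hd, -⟩ := hcon 1 le_rfl
  refine hz ⟨z.re, ⟨⟨hc, hd⟩, ?_⟩, Complex.ext (by simp) (by simp [him])⟩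
  rw [Set.mem_iUnion]
  rintro ⟨i, hi⟩
  exact (hcon (i + 1) (by omega)).2.2.2 hi

end Gaps

/-- there is a holomorphic g₊ on D = ℂ ∖ 𝒞(a,b) with g₊² = f_{a,b},
g₊ → 1 at ∞, and the branches g^N₊ converge to g₊ uniformly on compact subsets of D. -/
theorem stmt8 (a b : ℕ → ℝ)
    (hab : ∀ j, a j < b j)
    (hsub : ∀ i, 1 ≤ i → Set.Icc (a i) (b i) ⊆ Set.Ioo (a 0) (b 0))
    (hdisj : ∀ i k, 1 ≤ i → 1 ≤ k → i ≠ k →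
      Disjoint (Set.Icc (a i) (b i)) (Set.Icc (a k) (b k)))
    (f : ℂ → ℂ)
    (hf : ∀ z ∉ cantorAB a b,
      Tendsto (fun N => partialProd a b N z) atTop (𝓝 (f z)))
    (hfdiff : DifferentiableOn ℂ f (cantorAB a b)ᶜ)
    (gN : ℕ → ℂ → ℂ)
    (hgN : ∀ N, 1 ≤ N →
      DifferentiableOn ℂ (gN N) (domDN a b N) ∧
      (∀ z ∈ domDN a b N, gN N z ^ 2 = partialProd a b N z) ∧
      Tendsto (gN N) (Bornology.cobounded ℂ) (𝓝 1)) :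
    ∃ g : ℂ → ℂ,
      DifferentiableOn ℂ g (cantorAB a b)ᶜ ∧
      (∀ z ∉ cantorAB a b, g z ^ 2 = f z) ∧
      Tendsto g (Bornology.cobounded ℂ) (𝓝 1) ∧
      (∀ K : Set ℂ, IsCompact K → K ⊆ (cantorAB a b)ᶜ →
        TendstoUniformlyOn (fun N z => gN N z) g atTop K) := by
  have hbranch : ∀ j, 1 ≤ j → ∀ N, j ≤ N →
      Set.EqOn (gapBranch a b j N) (gN N) (gapDomain (a 0) (b 0) (a j) (b j)) := by
    intro j hj N hN
    obtain ⟨hdiff, hsq, hinf⟩ := hgN N (hj.trans hN)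
    have hdom := gapDomain_subset_domDN (a := a) (b := b) hj hN
    refine (eqOn_of_sq_eqOn_of_tendsto_cobounded (isPreconnected_gapDomain (hab j))
      (gapDomain_mem_cobounded _ _ _ _) (hdiff.continuousOn.mono hdom)
      (differentiableOn_gapBranch hab hsub hdisj hj N).continuousOn ?_
      (fun z hz => gapBranch_ne_zero hab hsub hdisj hj N hz) hinf
      (tendsto_gapBranch_cobounded a b j N)).symm
    intro z hz
    rw [hsq z (hdom hz), gapBranch_sq hj hN]
  choose! h hlim hinf using fun j (hj : 1 ≤ j) =>
    exists_tendstoLocallyUniformlyOn_gapBranch hab hsub hdisj hj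
  have hpt : ∀ j, 1 ≤ j → ∀ z ∈ gapDomain (a 0) (b 0) (a j) (b j),
      Tendsto (fun N => gN N z) atTop (𝓝 (h j z)) := by
    intro j hj z hz
    refine ((hlim j hj).tendsto_at hz).congr' ?_
    filter_upwards [eventually_ge_atTop j] with N hN using hbranch j hj N hN hz
  set g : ℂ → ℂ := fun z => limUnder atTop fun N => gN N z
  have hgh : ∀ j, 1 ≤ j → Set.EqOn (h j) g (gapDomain (a 0) (b 0) (a j) (b j)) :=
    fun j hj z hz => (hpt j hj z hz).limUnder_eq.symm
  have hopen : IsOpen (cantorAB a b)ᶜ :=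
    ((isCompact_Icc.diff (isOpen_iUnion fun i => isOpen_Ioo)).image
      Complex.continuous_ofReal).isClosed.isOpen_compl
  refine ⟨g, ?_, ?_, ?_, ?_⟩
  · intro z hz
    obtain ⟨j, hj, hzj⟩ := exists_mem_gapDomain hz
    have hdiff : DifferentiableOn ℂ (h j) (gapDomain (a 0) (b 0) (a j) (b j)) :=
      (hlim j hj).differentiableOn
        (Eventually.of_forall fun N => differentiableOn_gapBranch hab hsub hdisj hj N)
        (isOpen_gapDomain _ _ _ _)
    exact ((hdiff.congr fun w hw => (hgh j hj hw).symm).differentiableAt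
      ((isOpen_gapDomain _ _ _ _).mem_nhds hzj)).differentiableWithinAt
  · intro z hz
    obtain ⟨j, hj, hzj⟩ := exists_mem_gapDomain hz
    rw [← hgh j hj hzj]
    refine tendsto_nhds_unique (((hlim j hj).tendsto_at hzj).pow 2) ((hf z hz).congr' ?_)
    filter_upwards [eventually_ge_atTop j] with N hN using (gapBranch_sq hj hN z).symm
  · refine (hinf 1 le_rfl).congr' ?_
    filter_upwards [gapDomain_mem_cobounded (a 0) (b 0) (a 1) (b 1)] with z hz
      using hgh 1 le_rfl hz
  · intro K hK hKsub
    have hloc : TendstoLocallyUniformlyOn gN g atTop (cantorAB a b)ᶜ := by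
      intro u hu z hz
      obtain ⟨j, hj, hzj⟩ := exists_mem_gapDomain hz
      have hUopen := isOpen_gapDomain (a 0) (b 0) (a j) (b j)
      obtain ⟨t, ht, hev⟩ := hlim j hj u hu z hzj
      rw [hUopen.nhdsWithin_eq hzj] at ht
      refine ⟨t ∩ gapDomain (a 0) (b 0) (a j) (b j),
        mem_nhdsWithin_of_mem_nhds (inter_mem ht (hUopen.mem_nhds hzj)), ?_⟩
      filter_upwards [hev, eventually_ge_atTop j] with N hN hjN w hw
      rw [← hgh j hj hw.2, ← hbranch j hj N hjN hw.2]
      exact hN w hw.1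
    exact (tendstoLocallyUniformlyOn_iff_forall_isCompact hopen).1 hloc K hKsub hK
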